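/- For all integers ℓ ≥ 0 and r ≥ 0, the geometric realization of the poset X_{ℓ,r} is homeomorphic to the subspace D_{ℓ,r} of ℝ^ℓ, the union of all integer cubes contained in the domain {x ∈ ℝ^ℓ : 0 ≤ x_1 ≤ x_2 ≤ ... ≤ x_ℓ ≤ r}. (Lemma 2.5 of the paper.) -/

import Mathlib

/-- The geometric realization of a poset `P` (the realization of the nerve of `P`, i.e. of
the order complex of `P`), modelled concretely as the space of finitely supported
"barycentric coordinate" functions: assignments of nonnegative weights summing to `1`
whose support is a chain of `P`.  It is topologized as a subspace of `P → ℝ` with the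
product topology. -/
def PosetRealization (P : Type*) [Preorder P] : Set (P → ℝ) :=
  {f | (∀ p, 0 ≤ f p) ∧ (Function.support f).Finite ∧ ∑ᶠ p, f p = 1 ∧
      IsChain (· ≤ ·) (Function.support f)}

/-- The map of geometric realizations induced by a map of posets `g : P → Q`
(the realization of the induced simplicial map of nerves): a point with barycentric
coordinates `f` is sent to the point whose weight at `q` is the total weight of the
fiber `g ⁻¹ {q}`. -/
noncomputable def inducedChainMap {P Q : Type*} (g : P → Q) (f : P → ℝ) : Q → ℝ :=
  fun q => ∑ᶠ p ∈ {p | g p = q}, f p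

/-- The three letters `a`, `b`, `(ab)` used to form the words of the poset `X_{ℓ,r}`. -/
inductive XLetter : Type
  | A : XLetter
  | B : XLetter
  | AB : XLetter
deriving DecidableEq

/-- Number of occurrences of the letter `a` contributed by a letter. -/
def XLetter.ca : XLetter → ℕ
  | .A => 1
  | .B => 0
  | .AB => 1

/-- Number of occurrences of the letter `b` contributed by a letter. -/
def XLetter.cb : XLetter → ℕ
  | .A => 0
  | .B => 1
  | .AB => 1

/-- One step of the order relation on words: `XStep x y` holds iff `x` is obtained from `y`
by replacing one adjacent pair `ab` or `ba` by the single letter `(ab)`. -/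
def XStep (x y : List XLetter) : Prop :=
  ∃ u v : List XLetter, x = u ++ [XLetter.AB] ++ v ∧
    (y = u ++ [XLetter.A, XLetter.B] ++ v ∨ y = u ++ [XLetter.B, XLetter.A] ++ v)

/-- The underlying set of the poset `X_{ℓ,r}`: words in the letters `a`, `b`, `(ab)` with
exactly `l` occurrences of `a` and `r` occurrences of `b`. -/
def XWord (l r : ℕ) : Type :=
  {w : List XLetter // (w.map XLetter.ca).sum = l ∧ (w.map XLetter.cb).sum = r}

theorem XStep.length_lt {x y : List XLetter} (h : XStep x y) : x.length < y.length := by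
  obtain ⟨u, v, rfl, (rfl | rfl)⟩ := h <;> simp [List.length_append]

theorem xword_le_length {x y : List XLetter} (h : Relation.ReflTransGen XStep x y) :
    x.length ≤ y.length := by
  induction h with
  | refl => exact le_rfl
  | tail _ h ih => exact ih.trans h.length_lt.le

/-- The partial order on `X_{ℓ,r}`, generated by the replacement steps. -/
instance (l r : ℕ) : PartialOrder (XWord l r) where
  le x y := Relation.ReflTransGen XStep x.1 y.1
  le_refl _ := Relation.ReflTransGen.refl
  le_trans _ _ _ h h' := Relation.ReflTransGen.trans h h'
  le_antisymm x y h h' := by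
    rcases Relation.ReflTransGen.cases_head h with heq | ⟨z, hxz, hzy⟩
    · exact Subtype.ext heq
    · exact absurd ((xword_le_length h').trans_lt
        (hxz.length_lt.trans_le (xword_le_length hzy))) (lt_irrefl _)

/-- An integer cube in `ℝ^ℓ`: a product of factors each of which is either an integer
singleton `{m}` or an integer unit interval `[m, m+1]`. -/
def IsIntegerCube {l : ℕ} (C : Set (Fin l → ℝ)) : Prop :=
  ∃ (m : Fin l → ℤ) (s : Fin l → Bool),
    C = Set.univ.pi fun i =>
      if s i then Set.Icc (m i : ℝ) ((m i : ℝ) + 1) else {(m i : ℝ)}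

/-- The domain `{x : 0 ≤ x 1 ≤ x 2 ≤ … ≤ x ℓ ≤ r}` in `ℝ^ℓ`. -/
def XDomain (l r : ℕ) : Set (Fin l → ℝ) :=
  {x | (∀ i j : Fin l, i ≤ j → x i ≤ x j) ∧ (∀ i, 0 ≤ x i) ∧ ∀ i, x i ≤ (r : ℝ)}

/-- `D_{ℓ,r}`: the union of all integer cubes contained in the domain
`0 ≤ x 1 ≤ … ≤ x ℓ ≤ r`. -/
def Dlr (l r : ℕ) : Set (Fin l → ℝ) :=
  ⋃ C ∈ {C : Set (Fin l → ℝ) | IsIntegerCube C ∧ C ⊆ XDomain l r}, C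

open MeasureTheory Set

/-- The doubled barycentre coordinates of the cube of a word, where `k` is twice the number of
letters `b` preceding the word: the letter `a` contributes `k`, the letter `(ab)` contributes
`k + 1`. -/
def XLetter.encode : ℤ → List XLetter → List ℤ
  | _, [] => []
  | k, .A :: w => k :: encode k w
  | k, .B :: w => encode (k + 2) w
  | k, .AB :: w => (k + 1) :: encode (k + 2) w

/-- Reversed face relation between doubled barycentre coordinates: an odd number stands for an
interval, and its even neighbours for the endpoints. -/
def FaceRel (m n : ℤ) : Prop := n = m ∨ (Odd m ∧ (n = m + 1 ∨ n = m - 1))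

theorem FaceRel.refl (m : ℤ) : FaceRel m m := Or.inl rfl

theorem FaceRel.trans {m n p : ℤ} (h : FaceRel m n) (h' : FaceRel n p) : FaceRel m p := by
  unfold FaceRel at *
  grind

theorem FaceRel.eq_of_even {m n : ℤ} (h : FaceRel m n) (hm : Even m) : n = m := by
  unfold FaceRel at h
  grind

theorem FaceRel.eq_of_odd {m n : ℤ} (h : FaceRel m n) (hn : Odd n) : n = m := by
  unfold FaceRel at h
  grind

theorem FaceRel.abs_sub_le {m n : ℤ} (h : FaceRel m n) : |n - m| ≤ 1 := by
  unfold FaceRel at h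
  rw [abs_le]
  omega

namespace XLetter

theorem length_encode (k : ℤ) (w : List XLetter) :
    (encode k w).length = (w.map ca).sum := by
  induction w generalizing k with
  | nil => rfl
  | cons x w ih => cases x <;> simp [encode, ca, ih] <;> omega

theorem encode_append (k : ℤ) (u v : List XLetter) :
    encode k (u ++ v) = encode k u ++ encode (k + 2 * (u.map cb).sum) v := by
  induction u generalizing k with
  | nil => simp [encode]
  | cons x u ih =>
    cases x <;> simp [encode, cb, ih, mul_add, add_assoc]

theorem bounds_of_mem_encode {k n : ℤ} {w : List XLetter} (h : n ∈ encode k w) :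
    k ≤ n ∧ n ≤ k + 2 * (w.map cb).sum := by
  induction w generalizing k with
  | nil => simp [encode] at h
  | cons x w ih =>
    cases x <;> simp only [encode, List.mem_cons, List.map_cons, List.sum_cons, cb] at h ⊢
    · rcases h with rfl | h
      · omega
      · have := ih h; omega
    · have := ih h; omega
    · rcases h with rfl | h
      · omega
      · have := ih h; omega

theorem pairwise_encode {k : ℤ} (hk : Even k) (w : List XLetter) :
    (encode k w).Pairwise fun m n => m ≤ n ∧ (Odd m → m < n) := by
  induction w generalizing k with
  | nil => simp [encode]
  | cons x w ih =>
    cases x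
    · refine List.Pairwise.cons (fun n hn => ⟨(bounds_of_mem_encode hn).1, fun ho => ?_⟩) (ih hk)
      exact absurd hk (Int.not_even_iff_odd.2 ho)
    · exact ih (by grind)
    · refine List.Pairwise.cons (fun n hn => ?_) (ih (by grind))
      have := (bounds_of_mem_encode hn).1
      omega

theorem exists_encode_eq (L : List ℤ) (r : ℕ) (k : ℤ) (hk : Even k)
    (hL : L.Pairwise fun m n => m ≤ n ∧ (Odd m → m < n))
    (hb : ∀ n ∈ L, k ≤ n ∧ n ≤ k + 2 * r) :
    ∃ w, encode k w = L ∧ (w.map cb).sum = r := by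
  induction r generalizing k L with
  | zero =>
    induction L with
    | nil => exact ⟨[], rfl, rfl⟩
    | cons n L ih =>
      obtain ⟨w, hw, hw'⟩ := ih hL.of_cons fun m hm => hb m (List.mem_cons_of_mem _ hm)
      have := hb n List.mem_cons_self
      refine ⟨A :: w, ?_, by simpa [cb] using hw'⟩
      simp only [encode, hw, List.cons.injEq, and_true]
      omega
  | succ r ihr =>
    induction L with
    | nil =>
      obtain ⟨w, hw, hw'⟩ := ihr [] (k + 2) (by grind) List.Pairwise.nil (by simp)
      exact ⟨B :: w, hw, by simp [cb, hw']; omega⟩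
    | cons n L ih =>
      have hn := hb n List.mem_cons_self
      have hnL := (List.pairwise_cons.1 hL).1
      rcases lt_trichotomy n (k + 1) with hlt | heq | hgt
      · obtain ⟨w, hw, hw'⟩ := ih hL.of_cons fun m hm => hb m (List.mem_cons_of_mem _ hm)
        refine ⟨A :: w, ?_, by simpa [cb] using hw'⟩
        simp only [encode, hw, List.cons.injEq, and_true]
        omega
      · obtain ⟨w, hw, hw'⟩ := ihr L (k + 2) (by grind) hL.of_cons fun m hm => by
          have h1 := (hnL _ hm).2 (by grind)
          have h2 := hb m (List.mem_cons_of_mem _ hm)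
          push_cast at h2
          omega
        exact ⟨AB :: w, by simp [encode, hw, heq], by simp [cb, hw']; omega⟩
      · obtain ⟨w, hw, hw'⟩ := ihr (n :: L) (k + 2) (by grind) hL fun m hm => by
          have h2 := hb m hm
          push_cast at h2
          rcases List.mem_cons.1 hm with rfl | hm
          · omega
          · have := (hnL _ hm).1
            omega
        exact ⟨B :: w, hw, by simp [cb, hw']; omega⟩

theorem forall₂_encode_of_step {u v : List XLetter} (h : XStep u v) :
    List.Forall₂ FaceRel (encode 0 u) (encode 0 v) := by
  obtain ⟨p, q, rfl, rfl | rfl⟩ := h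
  all_goals
    simp only [List.append_assoc, encode_append 0 p]
    refine List.rel_append (List.forall₂_same.2 fun _ _ => .refl _) ?_
    simp only [List.cons_append, List.nil_append, encode]
    refine .cons (Or.inr ⟨by grind, by omega⟩) (List.forall₂_same.2 fun _ _ => .refl _)

theorem forall₂_encode_of_le {u v : List XLetter} (h : Relation.ReflTransGen XStep u v) :
    List.Forall₂ FaceRel (encode 0 u) (encode 0 v) := by
  induction h with
  | refl => exact List.forall₂_same.2 fun _ _ => .refl _
  | tail _ h ih =>
    have := forall₂_encode_of_step h
    rw [List.forall₂_iff_get] at *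
    exact ⟨ih.1.trans this.1, fun i h₁ h₂ =>
      (ih.2 i h₁ (ih.1 ▸ h₁)).trans (this.2 i _ h₂)⟩

theorem step_cons (x : XLetter) {u v : List XLetter} (h : XStep u v) :
    XStep (x :: u) (x :: v) := by
  obtain ⟨p, q, rfl, h⟩ := h
  refine ⟨x :: p, q, rfl, h.imp ?_ ?_⟩ <;> rintro rfl <;> rfl

theorem le_cons (x : XLetter) {u v : List XLetter} (h : Relation.ReflTransGen XStep u v) :
    Relation.ReflTransGen XStep (x :: u) (x :: v) :=
  Relation.ReflTransGen.lift (x :: ·) (fun _ _ => step_cons x) _ _ h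

/-- If the entries of a list are at least `k + 2` with `k` even, then a word whose encoding
consists of faces of them and which contains `b` starts with `b`. -/
theorem exists_eq_cons_of_forall₂ {k : ℤ} (hk : Even k) {L : List ℤ} {w : List XLetter}
    (hL : ∀ n ∈ L, k + 2 ≤ n) (h : List.Forall₂ FaceRel L (encode k w))
    (hw : (w.map cb).sum ≠ 0) : ∃ u, w = B :: u := by
  rcases w with _ | ⟨_ | _ | _, u⟩
  · simp at hw
  · exfalso
    rcases h with _ | ⟨h, -⟩
    have := hL _ List.mem_cons_self
    unfold FaceRel at h
    omega
  · exact ⟨u, rfl⟩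
  · exfalso
    rcases h with _ | ⟨h, -⟩
    have := hL _ List.mem_cons_self
    unfold FaceRel at h
    grind

theorem le_of_forall₂_encode {k : ℤ} (hk : Even k) {u v : List XLetter}
    (h : List.Forall₂ FaceRel (encode k u) (encode k v))
    (hb : (u.map cb).sum = (v.map cb).sum) : Relation.ReflTransGen XStep u v := by
  induction u generalizing k v with
  | nil =>
    rcases v with _ | ⟨_ | _ | _, v⟩
    · exact .refl
    · cases h
    · simp [cb] at hb; omega
    · cases h
  | cons x u ih =>
    have hk2 : Even (k + 2) := by grind
    cases x
    · rcases v with _ | ⟨_ | _ | _, v⟩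
      · cases h
      · rcases h with _ | ⟨-, h⟩
        exact le_cons _ (ih hk h (by simpa [cb] using hb))
      · exfalso
        have hlow : ∀ n ∈ encode (k + 2) v, k + 2 ≤ n := fun n hn => (bounds_of_mem_encode hn).1
        simp only [encode] at h
        generalize encode (k + 2) v = L at h hlow
        rcases h with _ | ⟨h, -⟩
        have := h.eq_of_even hk
        have := hlow _ List.mem_cons_self
        omega
      · rcases h with _ | ⟨h, -⟩
        have := h.eq_of_even hk
        omega
    · obtain ⟨v, rfl⟩ := exists_eq_cons_of_forall₂ hk (L := encode (k + 2) u)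
        (fun n hn => (bounds_of_mem_encode hn).1) h (by rw [← hb]; simp [cb])
      exact le_cons _ (ih hk2 h (by simpa [cb] using hb))
    · rcases v with _ | ⟨_ | _ | _, v⟩
      · cases h
      · rcases h with _ | ⟨-, h⟩
        have hb' : 1 + (u.map cb).sum = (v.map cb).sum := by simpa [cb] using hb
        obtain ⟨v, rfl⟩ := exists_eq_cons_of_forall₂ hk
          (fun n hn => (bounds_of_mem_encode hn).1) h (by omega)
        have := ih hk2 h (by simpa [cb] using hb')
        exact (le_cons AB this).tail ⟨[], v, rfl, Or.inl rfl⟩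
      · rcases v with _ | ⟨_ | _ | _, v⟩
        · cases h
        · rcases h with _ | ⟨-, h⟩
          have := ih hk2 h (by simpa [cb] using hb)
          exact (le_cons AB this).tail ⟨[], v, rfl, Or.inr rfl⟩
        · exfalso
          have hlow : ∀ n ∈ encode (k + 2 + 2) v, k + 2 + 2 ≤ n :=
            fun n hn => (bounds_of_mem_encode hn).1
          simp only [encode] at h
          generalize encode (k + 2 + 2) v = L at h hlow
          rcases h with _ | ⟨h, -⟩
          have := abs_le.1 h.abs_sub_le
          have := hlow _ List.mem_cons_self
          omega
        · exfalso
          rcases h with _ | ⟨h, -⟩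
          have := abs_le.1 h.abs_sub_le
          omega
      · rcases h with _ | ⟨-, h⟩
        exact le_cons _ (ih hk2 h (by simpa [cb] using hb))

end XLetter

namespace XWord

variable {l r : ℕ}

theorem length_encode (w : XWord l r) : (XLetter.encode 0 w.1).length = l :=
  (XLetter.length_encode 0 w.1).trans w.2.1

/-- Twice the barycentre of the integer cube corresponding to a word. -/
def center (w : XWord l r) (i : Fin l) : ℤ :=
  (XLetter.encode 0 w.1)[i.1]'(w.length_encode.symm ▸ i.2)

theorem le_iff {v w : XWord l r} : v ≤ w ↔ ∀ i, FaceRel (v.center i) (w.center i) := by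
  have key : v ≤ w ↔ List.Forall₂ FaceRel (XLetter.encode 0 v.1) (XLetter.encode 0 w.1) :=
    ⟨fun h => XLetter.forall₂_encode_of_le h,
      fun h => XLetter.le_of_forall₂_encode (by simp) h (v.2.2.trans w.2.2.symm)⟩
  rw [key, List.forall₂_iff_get]
  constructor
  · exact fun h i => h.2 i.1 _ _
  · exact fun h => ⟨v.length_encode.trans w.length_encode.symm,
      fun i h₁ h₂ => h ⟨i, h₁.trans_eq v.length_encode⟩⟩

theorem center_injective : Function.Injective (center : XWord l r → Fin l → ℤ) := by
  intro v w h
  refine le_antisymm (le_iff.2 fun i => ?_) (le_iff.2 fun i => ?_) <;> rw [h] <;> exact .refl _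

theorem center_bounds (w : XWord l r) (i : Fin l) : 0 ≤ w.center i ∧ w.center i ≤ 2 * r := by
  have := XLetter.bounds_of_mem_encode (k := 0) (w := w.1) (n := w.center i) (List.getElem_mem _)
  simpa only [w.2.2, zero_add] using this

theorem center_lt (w : XWord l r) {i j : Fin l} (hij : i < j) :
    w.center i ≤ w.center j ∧ (Odd (w.center i) → w.center i < w.center j) :=
  List.pairwise_iff_getElem.1 (XLetter.pairwise_encode (k := 0) (by simp) w.1) i.1 j.1 _ _ hij

theorem exists_center_eq (e : Fin l → ℤ) (hb : ∀ i, 0 ≤ e i ∧ e i ≤ 2 * r)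
    (hlt : ∀ i j, i < j → e i ≤ e j ∧ (Odd (e i) → e i < e j)) :
    ∃ w : XWord l r, w.center = e := by
  obtain ⟨w, hw, hw'⟩ := XLetter.exists_encode_eq (List.ofFn e) r 0 (by simp)
    (List.pairwise_ofFn.2 fun i j hij => hlt i j hij)
    (by simpa [List.mem_ofFn, forall_mem_range] using hb)
  refine ⟨⟨w, ?_, hw'⟩, ?_⟩
  · rw [← XLetter.length_encode 0, hw, List.length_ofFn]
  · funext i
    simp [center, hw]

instance : Finite (XWord l r) := by
  refine Set.finite_range_iff center_injective |>.1 <|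
    (Set.Finite.pi' fun _ : Fin l => Set.finite_Icc (0 : ℤ) (2 * r)).subset ?_
  rintro _ ⟨w, rfl⟩ i
  exact w.center_bounds i

noncomputable instance : Fintype (XWord l r) := Fintype.ofFinite _

end XWord

/-- For a level `t ∈ [0, 1)`, the real number `y` is rounded to an even integer at distance less
than `1 - t`, if there is one, and to the nearest odd integer otherwise. -/
noncomputable def roundAt (t y : ℝ) : ℤ :=
  if y < 2 * ⌊y / 2⌋ + 1 - t then 2 * ⌊y / 2⌋
  else if 2 * ⌊y / 2⌋ + 1 + t < y then 2 * ⌊y / 2⌋ + 2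
  else 2 * ⌊y / 2⌋ + 1

theorem two_mul_floor_half_bounds (y : ℝ) :
    2 * (⌊y / 2⌋ : ℝ) ≤ y ∧ y < 2 * ⌊y / 2⌋ + 2 := by
  have h₁ := Int.floor_le (y / 2)
  have h₂ := Int.lt_floor_add_one (y / 2)
  constructor <;> linarith

theorem roundAt_eq_of_even {t y : ℝ} {k : ℤ} (ht : 0 ≤ t) (hk : Even k)
    (h : |y - k| < 1 - t) : roundAt t y = k := by
  obtain ⟨m, rfl⟩ := hk
  rw [abs_lt] at h
  push_cast at h
  rcases le_or_gt (2 * (m : ℝ)) y with hy | hy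
  · have hq : ⌊y / 2⌋ = m := Int.floor_eq_iff.2 ⟨by linarith, by linarith⟩
    rw [roundAt, hq, if_pos (by linarith)]
    ring
  · have hq : ⌊y / 2⌋ = m - 1 :=
      Int.floor_eq_iff.2 ⟨by push_cast; linarith, by push_cast; linarith⟩
    rw [roundAt, hq, if_neg (by push_cast; linarith), if_pos (by push_cast; linarith)]
    ring

theorem roundAt_eq_of_odd {t y : ℝ} {k : ℤ} (ht : t < 1) (hk : Odd k)
    (h : |y - k| ≤ t) : roundAt t y = k := by
  obtain ⟨m, rfl⟩ := hk
  rw [abs_le] at h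
  push_cast at h
  have hq : ⌊y / 2⌋ = m := Int.floor_eq_iff.2 ⟨by linarith, by linarith⟩
  rw [roundAt, hq, if_neg (by linarith), if_neg (by linarith)]

theorem roundAt_two_mul {t : ℝ} (ht : t ∈ Ico (0 : ℝ) 1) (m : ℤ) : roundAt t (2 * m) = 2 * m :=
  roundAt_eq_of_even ht.1 (even_two_mul m) (by push_cast; simpa using ht.2)

theorem roundAt_mono (t : ℝ) : Monotone (roundAt t) := by
  intro y z hyz
  have hq : ⌊y / 2⌋ ≤ ⌊z / 2⌋ := Int.floor_le_floor (by linarith)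
  rcases hq.lt_or_eq with hq | hq
  · unfold roundAt
    split_ifs <;> omega
  · unfold roundAt
    rw [hq]
    split_ifs <;> first | omega | (exfalso; linarith)

theorem faceRel_roundAt {s t : ℝ} (hs : 0 ≤ s) (hst : s ≤ t) (y : ℝ) :
    FaceRel (roundAt t y) (roundAt s y) := by
  unfold roundAt FaceRel
  split_ifs <;> first | exact Or.inl rfl | (exfalso; linarith) |
    exact Or.inr ⟨odd_two_mul_add_one _, by omega⟩

theorem measurable_roundAt (y : ℝ) : Measurable fun t => roundAt t y :=
  Measurable.ite (measurableSet_lt (by fun_prop) (by fun_prop)) measurable_const <|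
    Measurable.ite (measurableSet_lt (by fun_prop) (by fun_prop)) measurable_const
      measurable_const

theorem setIntegral_const_add_mul_indicator (c d : ℝ) {a : ℝ} (ha : a ∈ Icc (0 : ℝ) 1) :
    ∫ t in Ico (0 : ℝ) 1, (c + (Ico 0 a).indicator (fun _ => d) t) = c + a * d := by
  rw [integral_add (by simp) ((integrable_const _).indicator measurableSet_Ico),
    setIntegral_indicator measurableSet_Ico, Ico_inter_Ico]
  simp [ha.1, ha.2]

theorem setIntegral_roundAt (y : ℝ) : ∫ t in Ico (0 : ℝ) 1, (roundAt t y : ℝ) = y := by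
  obtain ⟨h₁, h₂⟩ := two_mul_floor_half_bounds y
  rcases lt_or_ge y (2 * ⌊y / 2⌋ + 1) with h | h
  · rw [setIntegral_congr_fun (g := fun t => (2 * ⌊y / 2⌋ + 1 : ℝ) +
      (Ico 0 (2 * ⌊y / 2⌋ + 1 - y)).indicator (fun _ => (-1 : ℝ)) t) measurableSet_Ico ?_,
      setIntegral_const_add_mul_indicator _ _ ⟨by linarith, by linarith⟩]
    · ring
    · rintro t ⟨ht₀, ht₁⟩
      by_cases ht : t < 2 * ⌊y / 2⌋ + 1 - y
      · simp only [roundAt, if_pos (show y < 2 * ⌊y / 2⌋ + 1 - t by linarith),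
          indicator_of_mem (show t ∈ Ico 0 (2 * ⌊y / 2⌋ + 1 - y) from ⟨ht₀, ht⟩)]
        push_cast
        ring
      · simp only [roundAt, if_neg (show ¬ y < 2 * ⌊y / 2⌋ + 1 - t by linarith),
          if_neg (show ¬ 2 * ⌊y / 2⌋ + 1 + t < y by linarith),
          indicator_of_notMem (show t ∉ Ico 0 (2 * ⌊y / 2⌋ + 1 - y) from fun h => ht h.2)]
        push_cast
        ring
  · rw [setIntegral_congr_fun (g := fun t => (2 * ⌊y / 2⌋ + 1 : ℝ) +
      (Ico 0 (y - (2 * ⌊y / 2⌋ + 1))).indicator (fun _ => (1 : ℝ)) t) measurableSet_Ico ?_,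
      setIntegral_const_add_mul_indicator _ _ ⟨by linarith, by linarith⟩]
    · ring
    · rintro t ⟨ht₀, ht₁⟩
      have h₀ : ¬ y < 2 * ⌊y / 2⌋ + 1 - t := by linarith
      by_cases ht : t < y - (2 * ⌊y / 2⌋ + 1)
      · simp only [roundAt, if_neg h₀, if_pos (show 2 * ⌊y / 2⌋ + 1 + t < y by linarith),
          indicator_of_mem (show t ∈ Ico 0 (y - (2 * ⌊y / 2⌋ + 1)) from ⟨ht₀, ht⟩)]
        push_cast
        ring
      · simp only [roundAt, if_neg h₀, if_neg (show ¬ 2 * ⌊y / 2⌋ + 1 + t < y by linarith),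
          indicator_of_notMem (show t ∉ Ico 0 (y - (2 * ⌊y / 2⌋ + 1)) from fun h => ht h.2)]
        push_cast
        ring

theorem setIntegral_eq_sum_of_partition {ι : Type*} [Fintype ι] {U : Set ℝ} {S : ι → Set ℝ}
    (hS : ∀ i, MeasurableSet (S i)) (hfin : volume U ≠ ⊤) (hU : U = ⋃ i, S i)
    (hd : Pairwise (Function.onFun Disjoint S)) {g : ℝ → ℝ} {c : ι → ℝ}
    (hg : ∀ i, ∀ t ∈ S i, g t = c i) :
    ∫ t in U, g t = ∑ i, volume.real (S i) * c i := by
  have hSfin : ∀ i, volume (S i) ≠ ⊤ := fun i =>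
    ne_top_of_le_ne_top hfin (measure_mono (hU ▸ subset_iUnion S i))
  rw [hU, integral_iUnion_fintype hS hd fun i =>
    (integrableOn_const (C := c i) (hSfin i)).congr_fun (fun t ht => (hg i t ht).symm) (hS i)]
  refine Finset.sum_congr rfl fun i _ => ?_
  rw [setIntegral_congr_fun (hS i) (hg i), setIntegral_const, smul_eq_mul]

namespace XWord

variable {l r : ℕ}

theorem mem_Dlr {x : Fin l → ℝ} (w : XWord l r)
    (heven : ∀ i, Even (w.center i) → 2 * x i = w.center i)
    (hodd : ∀ i, |2 * x i - w.center i| ≤ 1) : x ∈ Dlr l r := by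
  refine mem_biUnion (x := univ.pi fun i =>
      if decide (Odd (w.center i)) then Icc ((w.center i / 2 : ℤ) : ℝ) ((w.center i / 2 : ℤ) + 1)
      else {((w.center i / 2 : ℤ) : ℝ)})
    ⟨⟨fun i => w.center i / 2, fun i => decide (Odd (w.center i)), rfl⟩, ?_⟩ ?_
  · intro z hz
    have hlow : ∀ i, ((w.center i / 2 : ℤ) : ℝ) ≤ z i := fun i => by
      have := hz i (mem_univ i)
      dsimp only at this
      split_ifs at this
      · exact this.1
      · exact (mem_singleton_iff.1 this).ge
    have hhigh : ∀ i, z i ≤ (((w.center i + 1) / 2 : ℤ) : ℝ) := fun i => by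
      have := hz i (mem_univ i)
      dsimp only at this
      split_ifs at this with h
      · refine this.2.trans ?_
        have h := of_decide_eq_true h
        exact_mod_cast (by grind : w.center i / 2 + 1 ≤ (w.center i + 1) / 2)
      · rw [mem_singleton_iff.1 this]
        exact_mod_cast (by omega : w.center i / 2 ≤ (w.center i + 1) / 2)
    refine ⟨fun i j hij => ?_, fun i => (hlow i).trans' ?_, fun i => (hhigh i).trans ?_⟩
    · rcases hij.eq_or_lt with rfl | hij
      · exact le_rfl
      · refine (hhigh i).trans ((hlow j).trans' ?_)
        have := w.center_lt hij
        exact_mod_cast (by grind : (w.center i + 1) / 2 ≤ w.center j / 2)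
    · have := w.center_bounds i
      exact_mod_cast (by omega : 0 ≤ w.center i / 2)
    · have := w.center_bounds i
      exact_mod_cast (by omega : (w.center i + 1) / 2 ≤ r)
  · intro i _
    by_cases h : Odd (w.center i)
    · have hd := abs_le.1 (hodd i)
      have hc : (w.center i : ℝ) = 2 * (w.center i / 2 : ℤ) + 1 := by
        exact_mod_cast (by grind : w.center i = 2 * (w.center i / 2) + 1)
      simp only [decide_eq_true h, if_true]
      constructor <;> linarith
    · have hd := heven i (Int.not_odd_iff_even.1 h)
      have hc : (w.center i : ℝ) = 2 * (w.center i / 2 : ℤ) := by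
        exact_mod_cast (by grind : w.center i = 2 * (w.center i / 2))
      simp only [h, decide_false, Bool.false_eq_true, if_false, mem_singleton_iff]
      linarith

theorem exists_center_eq_roundAt {x : Fin l → ℝ} (hx : x ∈ Dlr l r) {t : ℝ}
    (ht : t ∈ Ico (0 : ℝ) 1) : ∃ w : XWord l r, w.center = fun i => roundAt t (2 * x i) := by
  obtain ⟨_, ⟨⟨m, s, rfl⟩, hsub⟩, hx⟩ := mem_iUnion₂.1 hx
  let u : Fin l → ℤ := fun i => if s i then m i + 1 else m i
  have vertex : ∀ T : Fin l → Bool,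
      (fun j => ((if T j then u j else m j : ℤ) : ℝ)) ∈ XDomain l r := fun T => hsub fun j _ => by
    by_cases h : s j <;> by_cases h' : T j <;> simp [u, h, h']
  have hlow : ∀ i, 0 ≤ m i := fun i => by
    have := (vertex fun _ => false).2.1 i
    simpa using this
  have hhigh : ∀ i, u i ≤ r := fun i => by
    have := (vertex fun _ => true).2.2 i
    simp only [if_true] at this
    exact_mod_cast this
  have hlt : ∀ i j, i < j → u i ≤ m j := fun i j hij => by
    have := (vertex fun k => decide (k = i)).1 i j hij.le
    simp only [decide_true, if_true, hij.ne', decide_false, Bool.false_eq_true, if_false] at this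
    exact_mod_cast this
  have hx' : ∀ i, (m i : ℝ) ≤ x i ∧ x i ≤ u i := fun i => by
    have := hx i (mem_univ i)
    by_cases h : s i
    · simpa [u, h] using this
    · have : x i = m i := by simpa [h] using this
      simp [u, h, this]
  have hm : ∀ i, 2 * m i ≤ roundAt t (2 * x i) := fun i => by
    rw [← roundAt_two_mul ht]
    exact roundAt_mono t (by linarith [(hx' i).1])
  have hu : ∀ i, roundAt t (2 * x i) ≤ 2 * u i := fun i => by
    rw [← roundAt_two_mul ht]
    exact roundAt_mono t (by linarith [(hx' i).2])
  refine exists_center_eq _ (fun i => ?_) fun i j hij => ?_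
  · have := hm i; have := hu i; have := hlow i; have := hhigh i
    omega
  · have := hu i; have := hm j; have := hlt i j hij
    grind

/-- The levels at which the point `x` is rounded to the barycentre of the cube of `w`. -/
def levels (x : Fin l → ℝ) (w : XWord l r) : Set ℝ :=
  {t ∈ Ico (0 : ℝ) 1 | ∀ i, roundAt t (2 * x i) = w.center i}

theorem measurableSet_levels (x : Fin l → ℝ) (w : XWord l r) :
    MeasurableSet (levels x w) := by
  have : levels x w = Ico 0 1 ∩ ⋂ i, {t | roundAt t (2 * x i) = w.center i} := by
    ext
    simp [levels]
  rw [this]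
  exact measurableSet_Ico.inter (.iInter fun i =>
    measurable_roundAt _ (measurableSet_singleton _))

theorem sum_volume_levels_mul {x : Fin l → ℝ} (hx : x ∈ Dlr l r) {g : ℝ → ℝ}
    {c : XWord l r → ℝ} (hg : ∀ w, ∀ t ∈ levels x w, g t = c w) :
    ∑ w, volume.real (levels x w) * c w = ∫ t in Ico (0 : ℝ) 1, g t := by
  refine (setIntegral_eq_sum_of_partition (measurableSet_levels x) (by simp) ?_ ?_ hg).symm
  · refine Subset.antisymm (fun t ht => ?_) (iUnion_subset fun w t ht => ht.1)
    obtain ⟨w, hw⟩ := exists_center_eq_roundAt hx ht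
    exact mem_iUnion.2 ⟨w, ht, fun i => (congrFun hw i).symm⟩
  · exact fun v w hvw => disjoint_left.2 fun t hv hw =>
      hvw (center_injective (funext fun i => (hv.2 i).symm.trans (hw.2 i)))

theorem sum_volume_levels {x : Fin l → ℝ} (hx : x ∈ Dlr l r) :
    ∑ w : XWord l r, volume.real (levels x w) = 1 := by
  simpa using sum_volume_levels_mul hx (g := fun _ => 1) (c := fun _ => 1) (by simp)

theorem mem_realization_iff {f : XWord l r → ℝ} :
    f ∈ PosetRealization (XWord l r) ↔
      (∀ w, 0 ≤ f w) ∧ ∑ w, f w = 1 ∧ ∀ v w, f v ≠ 0 → f w ≠ 0 → v ≤ w ∨ w ≤ v := by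
  rw [PosetRealization, mem_ofPred_eq, finsum_eq_sum_of_fintype]
  refine and_congr_right fun _ => ⟨fun h => ⟨h.2.1, fun v w hv hw => h.2.2.total hv hw⟩,
    fun h => ⟨toFinite _, h.1, fun v hv w hw _ => h.2 v w hv hw⟩⟩

theorem volume_levels_mem_realization {x : Fin l → ℝ} (hx : x ∈ Dlr l r) :
    (fun w : XWord l r => volume.real (levels x w)) ∈ PosetRealization (XWord l r) := by
  refine mem_realization_iff.2
    ⟨fun _ => measureReal_nonneg, sum_volume_levels hx, fun v w hv hw => ?_⟩
  obtain ⟨s, hs⟩ := nonempty_of_measureReal_ne_zero hv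
  obtain ⟨t, ht⟩ := nonempty_of_measureReal_ne_zero hw
  rcases le_total s t with hst | hst
  · refine Or.inr (le_iff.2 fun i => ?_)
    rw [← hs.2, ← ht.2]
    exact faceRel_roundAt hs.1.1 hst _
  · refine Or.inl (le_iff.2 fun i => ?_)
    rw [← hs.2, ← ht.2]
    exact faceRel_roundAt ht.1.1 hst _

/-- The point of `ℝ^ℓ` with the given barycentric coordinates with respect to the barycentres of
the cubes. -/
noncomputable def barycenter (f : XWord l r → ℝ) (i : Fin l) : ℝ :=
  (∑ w, f w * w.center i) / 2

theorem barycenter_volume_levels {x : Fin l → ℝ} (hx : x ∈ Dlr l r) :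
    barycenter (fun w : XWord l r => volume.real (levels x w)) = x := by
  funext i
  rw [barycenter, sum_volume_levels_mul hx (g := fun t => (roundAt t (2 * x i) : ℝ)),
    setIntegral_roundAt]
  · ring
  · exact fun w t ht => by rw [ht.2 i]

theorem abs_two_mul_barycenter_sub_le {f g : XWord l r → ℝ} (hsum : ∑ w, f w = 1) {i : Fin l}
    {k : ℤ} (h : ∀ v, f v * |v.center i - k| ≤ g v) (hf : ∀ w, 0 ≤ f w) :
    |2 * barycenter f i - k| ≤ ∑ v, g v := by
  have : 2 * barycenter f i - k = ∑ v, f v * (v.center i - k : ℝ) := by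
    simp only [mul_sub, Finset.sum_sub_distrib, ← Finset.sum_mul, hsum, barycenter]
    ring
  rw [this]
  refine (Finset.abs_sum_le_sum_abs _ _).trans (Finset.sum_le_sum fun v _ => ?_)
  rw [abs_mul, abs_of_nonneg (hf v)]
  exact_mod_cast h v

theorem barycenter_mem_Dlr {f : XWord l r → ℝ} (hf : f ∈ PosetRealization (XWord l r)) :
    barycenter f ∈ Dlr l r := by
  obtain ⟨h0, h1, hc⟩ := mem_realization_iff.1 hf
  have hne : {w | f w ≠ 0}.Nonempty := by
    by_contra h
    have : ∀ w, f w = 0 := by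
      simpa [Set.not_nonempty_iff_eq_empty, eq_empty_iff_forall_notMem] using h
    simp [this] at h1
  obtain ⟨w, hw, hmin⟩ := (toFinite {w | f w ≠ 0}).exists_minimal hne
  have hle : ∀ v, f v ≠ 0 → w ≤ v := fun v hv => (hc w v hw hv).elim id fun h => hmin hv h
  refine mem_Dlr w (fun i hi => ?_) fun i => ?_
  · have := abs_two_mul_barycenter_sub_le (g := fun _ => 0) h1 (i := i) (k := w.center i)
      (fun v => ?_) h0
    · simpa [sub_eq_zero] using this
    · by_cases hv : f v = 0
      · simp [hv]
      · simp [(le_iff.1 (hle v hv) i).eq_of_even hi]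
  · rw [← h1]
    refine abs_two_mul_barycenter_sub_le h1 (fun v => ?_) h0
    by_cases hv : f v = 0
    · simp [hv]
    · refine mul_le_of_le_one_right (h0 v) ?_
      exact_mod_cast (le_iff.1 (hle v hv) i).abs_sub_le

open Classical in
theorem le_volume_levels_barycenter {f : XWord l r → ℝ}
    (hf : f ∈ PosetRealization (XWord l r)) (w : XWord l r) :
    f w ≤ volume.real (levels (barycenter f) w) := by
  obtain ⟨h0, h1, hc⟩ := mem_realization_iff.1 hf
  by_cases hw : f w = 0
  · rw [hw]
    exact measureReal_nonneg
  set above := ∑ v, if w < v then f v else 0 with habove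
  set below := ∑ v, if v < w then f v else 0 with hbelow
  have above_nonneg : 0 ≤ above := Finset.sum_nonneg fun v _ => by split_ifs <;> simp [h0]
  have below_nonneg : 0 ≤ below := Finset.sum_nonneg fun v _ => by split_ifs <;> simp [h0]
  have hle : above + f w + below ≤ 1 := by
    have : f w = ∑ v, if v = w then f v else 0 := by simp
    rw [← h1, habove, hbelow, this, ← Finset.sum_add_distrib, ← Finset.sum_add_distrib]
    refine Finset.sum_le_sum fun v _ => ?_
    by_cases h : v = w
    · simp [h]
    · by_cases h' : v < w
      · simp [h, h', h'.not_gt]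
      · by_cases h'' : w < v <;> simp [h, h', h'', h0]
  have hsub : Ico above (above + f w) ⊆ levels (barycenter f) w := by
    rintro t ⟨ht, ht'⟩
    refine ⟨⟨above_nonneg.trans ht, by linarith⟩, fun i => ?_⟩
    have hcmp : ∀ v, f v ≠ 0 → v = w ∨ v < w ∨ w < v := fun v hv => by
      rcases hc v w hv hw with h | h
      · exact h.eq_or_lt.imp id Or.inl
      · exact h.eq_or_lt.imp Eq.symm Or.inr
    rcases Int.even_or_odd (w.center i) with hi | hi
    · refine roundAt_eq_of_even (above_nonneg.trans ht) hi
        ((abs_two_mul_barycenter_sub_le h1 (fun v => ?_) h0).trans_lt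
          (show below < 1 - t by linarith))
      by_cases hv : f v = 0
      · simp [hv]
      rcases hcmp v hv with rfl | h | h
      · simp
      · rw [if_pos h, abs_sub_comm]
        refine mul_le_of_le_one_right (h0 v) ?_
        exact_mod_cast (le_iff.1 h.le i).abs_sub_le
      · simp [(le_iff.1 h.le i).eq_of_even hi, h.not_gt]
    · refine roundAt_eq_of_odd (by linarith) hi
        ((abs_two_mul_barycenter_sub_le h1 (fun v => ?_) h0).trans ht)
      by_cases hv : f v = 0
      · simp [hv]
      rcases hcmp v hv with rfl | h | h
      · simp
      · simp [(le_iff.1 h.le i).eq_of_odd hi, h.not_gt]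
      · rw [if_pos h]
        refine mul_le_of_le_one_right (h0 v) ?_
        exact_mod_cast (le_iff.1 h.le i).abs_sub_le
  calc f w = volume.real (Ico above (above + f w)) := by simp [h0]
    _ ≤ _ := measureReal_mono hsub
      (ne_top_of_le_ne_top (by simp) (measure_mono fun t (ht : t ∈ levels _ w) => ht.1))

theorem volume_levels_barycenter {f : XWord l r → ℝ}
    (hf : f ∈ PosetRealization (XWord l r)) :
    (fun w => volume.real (levels (barycenter f) w)) = f := by
  have hle := le_volume_levels_barycenter hf
  have hsum : ∑ w, f w = ∑ w, volume.real (levels (barycenter f) w) :=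
    (mem_realization_iff.1 hf).2.1.trans (sum_volume_levels (barycenter_mem_Dlr hf)).symm
  funext w
  exact ((Finset.sum_eq_sum_iff_of_le fun w _ => hle w).1 hsum w (Finset.mem_univ w)).symm

theorem continuous_barycenter :
    Continuous (barycenter : (XWord l r → ℝ) → Fin l → ℝ) := by
  unfold barycenter
  fun_prop

theorem isCompact_realization : IsCompact (PosetRealization (XWord l r)) := by
  have hclosed : IsClosed (PosetRealization (XWord l r)) := by
    have : PosetRealization (XWord l r) = {f | ∀ w, 0 ≤ f w} ∩ ({f | ∑ w, f w = 1} ∩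
        {f | ∀ v w, ¬(v ≤ w ∨ w ≤ v) → f v * f w = 0}) := by
      ext f
      rw [mem_realization_iff]
      simp only [mem_inter_iff, mem_ofPred_eq, mul_eq_zero]
      grind
    rw [this]
    simp only [ofPred_forall]
    refine .inter (isClosed_iInter fun w => isClosed_le continuous_const (by fun_prop))
      (.inter (isClosed_eq (by fun_prop) continuous_const) ?_)
    exact isClosed_iInter fun v => isClosed_iInter fun w => isClosed_iInter fun _ =>
      isClosed_eq (by fun_prop) continuous_const
  refine (isCompact_univ_pi fun _ : XWord l r =>
    isCompact_Icc (a := (0 : ℝ)) (b := 1)).of_isClosed_subset hclosed fun f hf w _ => ?_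
  obtain ⟨h0, h1, -⟩ := mem_realization_iff.1 hf
  exact ⟨h0 w, h1 ▸ Finset.single_le_sum (fun v _ => h0 v) (Finset.mem_univ w)⟩

/-- The barycentre map as a bijection between the realization and the union of cubes. -/
noncomputable def realizationEquiv (l r : ℕ) : PosetRealization (XWord l r) ≃ Dlr l r where
  toFun f := ⟨barycenter f.1, barycenter_mem_Dlr f.2⟩
  invFun x := ⟨_, volume_levels_mem_realization x.2⟩
  left_inv f := Subtype.ext (volume_levels_barycenter f.2)
  right_inv x := Subtype.ext (barycenter_volume_levels x.2)

end XWord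

/-- **Lemma 2.5.** For all `ℓ, r ≥ 0`, the geometric realization of the poset `X_{ℓ,r}`
is homeomorphic to the subspace `D_{ℓ,r} ⊆ ℝ^ℓ`, the union of the integer cubes contained
in the domain `0 ≤ x 1 ≤ … ≤ x ℓ ≤ r`. -/
theorem realization_XWord_homeomorph_Dlr (l r : ℕ) :
    Nonempty (↥(PosetRealization (XWord l r)) ≃ₜ ↥(Dlr l r)) := by
  have := isCompact_iff_compactSpace.1 (XWord.isCompact_realization (l := l) (r := r))
  exact ⟨Continuous.homeoOfEquivCompactToT2 (f := XWord.realizationEquiv l r)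
    ((XWord.continuous_barycenter.comp continuous_subtype_val).subtype_mk _)⟩
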